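/- Let A ⊆ 2^ω be μ-measurable. For each n ∈ ℕ set A_{2n} = {s ∈ 2^{<ω} : μ(A ∩ U_s) > (1 − 2^{-2n})·2^{-|s|}}, and let A*_{2n} be the set of all elements of A_{2n} having no proper initial segment in A_{2n} (so A*_{2n} is an antichain and every element of A_{2n} has an initial segment in A*_{2n}). Suppose that for each n ∈ ℕ and each s ∈ A*_{2n} a μ-measurable set D^n_s ⊆ 2^ω is given with μ(D^n_s ∩ U_s) > (1 − 2^{-2n})·2^{-|s|}. Let B = ⋃_{n∈ℕ} ⋃_{s∈A*_{2n}} D^n_s. Then μ(A \ B) = 0. -/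

import Mathlib

open MeasureTheory
open scoped ENNReal

/-- The basic cylinder `U_s ⊆ 2^ω` determined by a finite binary string `s`:
the set of all `x : ℕ → Bool` having `s` as an initial segment. -/
def cylinder (s : List Bool) : Set (ℕ → Bool) :=
  {x | ∀ i : ℕ, ∀ h : i < s.length, x i = s.get ⟨i, h⟩}

/-- The set `A_m` of finite binary strings `s` on which the measurable set `A` has
relative measure greater than `1 - 2^{-m}`, i.e.
`μ (A ∩ U_s) > (1 - 2^{-m}) · 2^{-|s|}`. -/
def densityLevel (μ : Measure (ℕ → Bool)) (A : Set (ℕ → Bool)) (m : ℕ) :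
    Set (List Bool) :=
  {s | (1 - (1 / 2 : ℝ≥0∞) ^ m) * (1 / 2 : ℝ≥0∞) ^ s.length < μ (A ∩ cylinder s)}

/-- The set `A*_m` of minimal elements of `A_m`: those `s ∈ A_m` having no proper
initial segment in `A_m`.  It is an antichain, and every element of `A_m` has an
initial segment in `A*_m`. -/
def minimalDensityLevel (μ : Measure (ℕ → Bool)) (A : Set (ℕ → Bool)) (m : ℕ) :
    Set (List Bool) :=
  {s ∈ densityLevel μ A m | ∀ t : List Bool, t <+: s → t ≠ s → t ∉ densityLevel μ A m}

/-- The initial segment of length `k` of `x`. -/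
def pre (x : ℕ → Bool) (k : ℕ) : List Bool := List.ofFn (fun i : Fin k => x i)

lemma mem_cyl_iff (x : ℕ → Bool) (s : List Bool) : x ∈ cylinder s ↔ pre x s.length = s := by
  constructor
  · intro h
    apply List.ext_get
    · simp [pre]
    · intro n h1 h2
      simpa [pre] using h n h2
  · intro h i hi
    have h2 : (pre x s.length)[i]'(by simpa [pre] using hi) = s[i] := by
      simp only [h]
    simpa [pre] using h2

lemma length_pre (x : ℕ → Bool) (k : ℕ) : (pre x k).length = k := by simp [pre]

lemma mem_cyl_pre (x : ℕ → Bool) (k : ℕ) : x ∈ cylinder (pre x k) := by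
  rw [mem_cyl_iff, length_pre]

lemma cyl_anti {s t : List Bool} (h : s <+: t) : cylinder t ⊆ cylinder s := by
  intro x hx i hi
  rw [hx i (lt_of_lt_of_le hi h.length_le)]
  obtain ⟨u, rfl⟩ := h
  simp [List.getElem_append_left hi]

lemma pre_prefix (x : ℕ → Bool) {j k : ℕ} (h : j ≤ k) : pre x j <+: pre x k := by
  rw [List.prefix_iff_eq_take]
  apply List.ext_get
  · simp [pre, h]
  · intro n h1 h2
    simp [pre]

/-- Minimal elements of a set of strings. -/
def minOf (P : Set (List Bool)) : Set (List Bool) :=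
  {s ∈ P | ∀ t : List Bool, t <+: s → t ≠ s → t ∉ P}

lemma exists_minOf {P : Set (List Bool)} {s : List Bool} (hs : s ∈ P) {x : ℕ → Bool}
    (hx : x ∈ cylinder s) : ∃ t ∈ minOf P, x ∈ cylinder t := by
  classical
  have hex : ∃ k, pre x k ∈ P := ⟨s.length, by rwa [(mem_cyl_iff x s).1 hx]⟩
  refine ⟨pre x (Nat.find hex), ⟨Nat.find_spec hex, ?_⟩, mem_cyl_pre _ _⟩
  intro t ht hne htP
  have h1 : pre x t.length = t := (mem_cyl_iff x t).1 (cyl_anti ht (mem_cyl_pre _ _))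
  have h2 : Nat.find hex ≤ t.length := Nat.find_min' hex (by rwa [h1])
  have h3 := ht.length_le
  rw [length_pre] at h3
  apply hne
  rw [← h1, le_antisymm h3 h2]

lemma disj_minOf (P : Set (List Bool)) : (minOf P).PairwiseDisjoint cylinder := by
  intro s hs t ht hne
  rw [Function.onFun, Set.disjoint_left]
  intro x hxs hxt
  have h1 := (mem_cyl_iff x s).1 hxs
  have h2 := (mem_cyl_iff x t).1 hxt
  rcases le_total s.length t.length with h | h
  · have := pre_prefix x h
    rw [h1, h2] at this
    exact ht.2 s this hne hs.1
  · have := pre_prefix x h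
    rw [h1, h2] at this
    exact hs.2 t this hne.symm ht.1

lemma cyl_pre_eq (x : ℕ → Bool) (k : ℕ) :
    cylinder (pre x k) = PiNat.cylinder (E := fun _ => Bool) x k := by
  ext y
  simp [_root_.cylinder, PiNat.cylinder, pre]

lemma meas_cyl (s : List Bool) : MeasurableSet (cylinder s) := by
  have : cylinder s = ⋂ i : Fin s.length, (fun x : ℕ → Bool => x i) ⁻¹' {s.get i} := by
    ext x
    simp [_root_.cylinder, Fin.forall_iff]
  rw [this]
  exact MeasurableSet.iInter fun i => measurable_pi_apply _ (measurableSet_singleton _)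

lemma tsum_minOf (μ : Measure (ℕ → Bool)) (P : Set (List Bool)) :
    ∑' s : minOf P, μ (cylinder s) = μ (⋃ s ∈ minOf P, cylinder s) :=
  (measure_biUnion (Set.to_countable _) (disj_minOf P) (fun s _ => meas_cyl s)).symm

lemma open_bound (μ : Measure (ℕ → Bool)) (E W : Set (ℕ → Bool)) (c : ℝ≥0∞)
    (hE : ∀ s, μ (E ∩ cylinder s) ≤ c * μ (cylinder s)) (hW : IsOpen W) (hEW : E ⊆ W) :
    μ E ≤ c * μ W := by
  set P : Set (List Bool) := {s | cylinder s ⊆ W} with hP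
  have hsub : E ⊆ ⋃ s ∈ minOf P, (E ∩ cylinder s) := by
    intro x hx
    obtain ⟨v, ⟨y, n, rfl⟩, hxv, hvW⟩ :=
      (PiNat.isTopologicalBasis_cylinders (fun _ => Bool)).exists_subset_of_mem_open (hEW hx) hW
    rw [← cyl_pre_eq] at hxv hvW
    obtain ⟨t, ht, hxt⟩ := exists_minOf (P := P) hvW hxv
    exact Set.mem_biUnion ht ⟨hx, hxt⟩
  calc μ E ≤ μ (⋃ s ∈ minOf P, (E ∩ cylinder s)) := measure_mono hsub
    _ ≤ ∑' s : minOf P, μ (E ∩ cylinder s) := measure_biUnion_le _ (Set.to_countable _) _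
    _ ≤ ∑' s : minOf P, c * μ (cylinder s) := ENNReal.tsum_le_tsum fun s => hE s
    _ = c * μ (⋃ s ∈ minOf P, cylinder s) := by rw [ENNReal.tsum_mul_left, tsum_minOf]
    _ ≤ c * μ W := by
      gcongr
      exact Set.iUnion₂_subset fun s hs => hs.1

lemma null_of_bound (μ : Measure (ℕ → Bool)) [IsProbabilityMeasure μ] (E : Set (ℕ → Bool))
    (c : ℝ≥0∞) (hc : c < 1) (hE : ∀ s, μ (E ∩ cylinder s) ≤ c * μ (cylinder s)) : μ E = 0 := by
  have h : μ E ≤ c * μ E := by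
    refine ENNReal.le_of_forall_pos_le_add fun ε hε _ => ?_
    obtain ⟨W, hEW, hW, hle⟩ := Set.exists_isOpen_le_add E μ
      (ε := (ε : ℝ≥0∞)) (by exact_mod_cast hε.ne')
    calc μ E ≤ c * μ W := open_bound μ E W c hE hW hEW
      _ ≤ c * (μ E + ε) := by gcongr
      _ = c * μ E + c * ε := mul_add _ _ _
      _ ≤ c * μ E + 1 * ε := by gcongr
      _ = _ := by rw [one_mul]
  by_contra h0
  have : c * μ E < 1 * μ E := ENNReal.mul_lt_mul_left h0 (measure_ne_top μ E) hc
  rw [one_mul] at this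
  exact absurd h (not_le.2 this)

/-- Let `A ⊆ 2^ω` be `μ`-measurable (with `μ` the fair-coin measure).
For each `n` let `A_{2n}` be the strings of relative `A`-measure `> 1 - 2^{-2n}` and
`A*_{2n}` the set of its minimal elements.  If for each `n` and each `s ∈ A*_{2n}` a
`μ`-measurable set `D^n_s` is given with `μ (D^n_s ∩ U_s) > (1 - 2^{-2n}) · 2^{-|s|}`,
then `B = ⋃_n ⋃_{s ∈ A*_{2n}} D^n_s` satisfies `μ (A \ B) = 0`. -/
theorem measure_diff_union_null_of_dense_pieces
    (μ : Measure (ℕ → Bool)) [IsProbabilityMeasure μ]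
    (hμ : ∀ s : List Bool, μ (cylinder s) = (1 / 2 : ℝ≥0∞) ^ s.length)
    (A : Set (ℕ → Bool)) (hA : NullMeasurableSet A μ)
    (D : ℕ → List Bool → Set (ℕ → Bool))
    (hDmeas : ∀ (n : ℕ) (s : List Bool), NullMeasurableSet (D n s) μ)
    (hD : ∀ (n : ℕ), ∀ s ∈ minimalDensityLevel μ A (2 * n),
      (1 - (1 / 2 : ℝ≥0∞) ^ (2 * n)) * (1 / 2 : ℝ≥0∞) ^ s.length < μ (D n s ∩ cylinder s)) :
    μ (A \ ⋃ n : ℕ, ⋃ s ∈ minimalDensityLevel μ A (2 * n), D n s) = 0 := by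
  set B := ⋃ n : ℕ, ⋃ s ∈ minimalDensityLevel μ A (2 * n), D n s with hB
  have key : ∀ n : ℕ, μ (A \ B) ≤ (1 / 2 : ℝ≥0∞) ^ (2 * n) := by
    intro n
    set ε := (1 / 2 : ℝ≥0∞) ^ (2 * n) with hε
    have hε0 : ε ≠ 0 := by simp [hε]
    have hε1 : ε ≤ 1 := pow_le_one₀ (by simp) (by simp)
    set P := densityLevel μ A (2 * n) with hP
    have hPm : minimalDensityLevel μ A (2 * n) = minOf P := rfl
    have h1 : μ (A \ ⋃ s ∈ minOf P, cylinder s) = 0 := by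
      apply null_of_bound μ _ (1 - ε) (ENNReal.sub_lt_self (by simp) (by simp) hε0)
      intro s
      by_cases hs : s ∈ P
      · have : (A \ ⋃ s ∈ minOf P, cylinder s) ∩ cylinder s = ∅ := by
          rw [Set.eq_empty_iff_forall_notMem]
          rintro x ⟨⟨_, hx⟩, hxs⟩
          obtain ⟨t, ht, hxt⟩ := exists_minOf hs hxs
          exact hx (Set.mem_biUnion ht hxt)
        simp [this]
      · rw [hμ]
        exact (measure_mono (Set.inter_subset_inter_left _ Set.sdiff_subset)).trans (not_lt.1 hs)
    have h2 : ∀ s ∈ minOf P, μ (cylinder s \ D n s) ≤ ε * μ (cylinder s) := by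
      intro s hs
      have a := (hD n s hs).le
      have b := measure_inter_add_sdiff₀ (μ := μ) (cylinder s) (hDmeas n s)
      rw [Set.inter_comm] at b
      rw [← hμ] at a
      have c : (1 - ε) * μ (cylinder s) + ε * μ (cylinder s) = μ (cylinder s) := by
        rw [← add_mul, tsub_add_cancel_of_le hε1, one_mul]
      have d : (1 - ε) * μ (cylinder s) + μ (cylinder s \ D n s) ≤
          (1 - ε) * μ (cylinder s) + ε * μ (cylinder s) := by
        rw [c]
        calc _ ≤ μ (D n s ∩ cylinder s) + μ (cylinder s \ D n s) := by gcongr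
          _ = _ := b
      exact (ENNReal.add_le_add_iff_left
        (ENNReal.mul_ne_top (by simp) (measure_ne_top _ _))).1 d
    have hsub : A \ B ⊆ (A \ ⋃ s ∈ minOf P, cylinder s) ∪
        ⋃ s ∈ minOf P, (cylinder s \ D n s) := by
      rintro x ⟨hxA, hxB⟩
      by_cases hx : x ∈ ⋃ s ∈ minOf P, cylinder s
      · right
        obtain ⟨s, hs, hxs⟩ := Set.mem_iUnion₂.1 hx
        exact Set.mem_biUnion hs ⟨hxs, fun hd =>
          hxB (Set.mem_iUnion.2 ⟨n, Set.mem_biUnion hs hd⟩)⟩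
      · exact Or.inl ⟨hxA, hx⟩
    calc μ (A \ B) ≤ _ := measure_mono hsub
      _ ≤ _ := measure_union_le _ _
      _ = μ (⋃ s ∈ minOf P, (cylinder s \ D n s)) := by rw [h1, zero_add]
      _ ≤ ∑' s : minOf P, μ (cylinder s \ D n s) := measure_biUnion_le _ (Set.to_countable _) _
      _ ≤ ∑' s : minOf P, ε * μ (cylinder s) := ENNReal.tsum_le_tsum fun s => h2 s s.2
      _ = ε * μ (⋃ s ∈ minOf P, cylinder s) := by rw [ENNReal.tsum_mul_left, tsum_minOf]
      _ ≤ ε * 1 := by gcongr; exact prob_le_one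
      _ = ε := mul_one _
  have hlim : Filter.Tendsto (fun n : ℕ => (1 / 2 : ℝ≥0∞) ^ (2 * n)) Filter.atTop (nhds 0) :=
    (ENNReal.tendsto_pow_atTop_nhds_zero_of_lt_one (by simp)).comp
      (Filter.tendsto_atTop_mono (fun n => by simp only [id]; omega) Filter.tendsto_id)
  exact le_antisymm (ge_of_tendsto' hlim key) (by simp)
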